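/- Let n ≥ 1 and let u : ℝⁿ → ℝ be a C⁴ function satisfying the ∞-Laplace equation Δ_∞ u := Σ_{j,k=1}^{n} u_{x_j}·u_{x_k}·u_{x_j x_k} = 0 at every point of ℝⁿ. Then u is affine linear, i.e. u(x) = ⟨a, x⟩ + c for some a ∈ ℝⁿ and c ∈ ℝ. -/

import Mathlib

open scoped RealInnerProductSpace

/-- `j`-th first partial derivative of `u : ℝⁿ → ℝ`. -/
noncomputable def pd {n : ℕ} (u : EuclideanSpace ℝ (Fin n) → ℝ)
    (x : EuclideanSpace ℝ (Fin n)) (j : Fin n) : ℝ :=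
  fderiv ℝ u x (EuclideanSpace.single j 1)

/-- Second partial derivative `u_{x_j x_k}` of `u : ℝⁿ → ℝ`. -/
noncomputable def pd2 {n : ℕ} (u : EuclideanSpace ℝ (Fin n) → ℝ)
    (x : EuclideanSpace ℝ (Fin n)) (j k : Fin n) : ℝ :=
  fderiv ℝ (fun y => fderiv ℝ u y (EuclideanSpace.single j 1)) x (EuclideanSpace.single k 1)

section YuHelpers

open Filter Topology

variable {E : Type*} [NormedAddCommGroup E] [InnerProductSpace ℝ E]

/-- Necessary first and second order conditions at a one-dimensional local maximum. -/
theorem yu_second_test {f f' : ℝ → ℝ} {c : ℝ} (hf : ∀ t, HasDerivAt f (f' t) t)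
    (hf' : HasDerivAt f' c 0) (hmax : IsLocalMax f 0) : f' 0 = 0 ∧ c ≤ 0 := by
  have h1 : deriv f = f' := funext fun t => (hf t).deriv
  have h0 : f' 0 = 0 := by rw [← h1]; exact hmax.deriv_eq_zero
  refine ⟨h0, ?_⟩
  by_contra hc
  push Not at hc
  have hmin : IsLocalMin f 0 := by
    apply isLocalMin_of_deriv_deriv_pos
    · rw [h1, hf'.deriv]; exact hc
    · rw [h1]; exact h0
    · exact (hf 0).continuousAt
  have heq : f =ᶠ[𝓝 0] fun _ => f 0 := by
    filter_upwards [hmax, hmin] with t h1 h2 using le_antisymm h1 h2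
  have h2 : deriv f =ᶠ[𝓝 0] fun _ => 0 := by
    have := heq.deriv
    simpa using this
  have h3 := h2.deriv_eq
  rw [h1, hf'.deriv] at h3
  simp at h3
  linarith

/-- The derivative of a gradient field is symmetric. -/
theorem yu_symm {g : E → ℝ} (hg : ContDiff ℝ 2 g) {X : E → E} (hX : Differentiable ℝ X)
    (h : ∀ x v, fderiv ℝ g x v = ⟪X x, v⟫) (x a b : E) :
    ⟪fderiv ℝ X x a, b⟫ = ⟪fderiv ℝ X x b, a⟫ := by
  have hs : IsSymmSndFDerivAt ℝ g x :=
    hg.contDiffAt.isSymmSndFDerivAt (by simp)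
  have h1 : fderiv ℝ g = fun y => innerSL ℝ (X y) := by
    funext y; ext v; simp [h]
  have h2 : HasFDerivAt (fderiv ℝ g) ((innerSL ℝ).comp (fderiv ℝ X x)) x := by
    rw [h1]
    exact (innerSL ℝ (E := E)).hasFDerivAt.comp x (hX x).hasFDerivAt
  have h3 := hs a b
  rw [h2.fderiv] at h3
  simpa using h3

theorem yu_hasDerivAt_line {F : Type*} [NormedAddCommGroup F] [NormedSpace ℝ F]
    {X : E → F} (hX : Differentiable ℝ X) (x p : E) (t : ℝ) :
    HasDerivAt (fun s : ℝ => X (x + s • p)) (fderiv ℝ X (x + t • p) p) t := by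
  have h1 : HasDerivAt (fun s : ℝ => x + s • p) p t := by
    simpa using ((hasDerivAt_id t).smul_const p).const_add x
  exact (hX (x + t • p)).hasFDerivAt.comp_hasDerivAt t h1

/-- Bochner-type inequality. -/
theorem yu_key {U X : E → E} (hU : ContDiff ℝ 2 U) (hX : ContDiff ℝ 2 X)
    (sU : ∀ x a b, ⟪fderiv ℝ U x a, b⟫ = ⟪fderiv ℝ U x b, a⟫)
    (sX : ∀ x a b, ⟪fderiv ℝ X x a, b⟫ = ⟪fderiv ℝ X x b, a⟫)
    (hXU : ∀ x, fderiv ℝ U x (U x) = (1 + ⟪U x, U x⟫) • X x)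
    (horth : ∀ x, ⟪X x, U x⟫ = 0) (x : E) :
    2 * (1 + ⟪U x, U x⟫) * ⟪X x, X x⟫ ^ 2 - 4 * (1 + ⟪U x, U x⟫) * ⟪fderiv ℝ X x (X x), X x⟫
      ≤ 2 * ⟪fderiv ℝ X x (U x), fderiv ℝ X x (U x)⟫
        + 2 * ⟪fderiv ℝ (fderiv ℝ X) x (U x) (U x), X x⟫ := by
  have dU : Differentiable ℝ U := hU.differentiable (by norm_num)
  have dX : Differentiable ℝ X := hX.differentiable (by norm_num)
  have dDX : Differentiable ℝ (fderiv ℝ X) :=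
    (hX.fderiv_right (m := 1) (by norm_num)).differentiable (by norm_num)
  have hUx := fun x => (dU x).hasFDerivAt
  have hXx := fun x => (dX x).hasFDerivAt
  have hDXx := fun x => (dDX x).hasFDerivAt
  -- first derivative of orthogonality
  have hG : ∀ x h, ⟪X x, fderiv ℝ U x h⟫ + ⟪fderiv ℝ X x h, U x⟫ = 0 := by
    intro x h
    have h1 := (hXx x).inner ℝ (hUx x)
    have h2 : HasFDerivAt (fun y => ⟪X y, U y⟫) (0 : E →L[ℝ] ℝ) x := by
      simp only [horth]; exact hasFDerivAt_const _ _
    have h3 := h1.unique h2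
    have h4 := DFunLike.congr_fun h3 h
    simpa [fderivInnerCLM_apply] using h4
  have hDUX : ∀ x, fderiv ℝ U x (X x) = - fderiv ℝ X x (U x) := by
    intro x
    rw [eq_neg_iff_add_eq_zero]
    refine ext_inner_right ℝ fun h => ?_
    rw [inner_add_left, sU, sX, inner_zero_left, ← hG x h, real_inner_comm (X x)]
  have hF : ∀ x, ⟪fderiv ℝ X x (U x), U x⟫ = -((1 + ⟪U x, U x⟫) * ⟪X x, X x⟫) := by
    intro x
    have := hG x (U x)
    rw [hXU, inner_smul_right] at this
    linarith
  -- derivative of `hF`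
  have hDF : ∀ h, ⟪fderiv ℝ X x (U x), fderiv ℝ U x h⟫ +
      ⟪fderiv ℝ (fderiv ℝ X) x h (U x) + fderiv ℝ X x (fderiv ℝ U x h), U x⟫ =
      -((1 + ⟪U x, U x⟫) * (2 * ⟪fderiv ℝ X x h, X x⟫)
        + (2 * ⟪fderiv ℝ U x h, U x⟫) * ⟪X x, X x⟫) := by
    intro h
    have h1 := ((hDXx x).clm_apply (hUx x)).inner ℝ (hUx x)
    have h2 := ((((hUx x).inner ℝ (hUx x)).const_add 1).mul ((hXx x).inner ℝ (hXx x))).neg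
    have h3 : (fun y => ⟪fderiv ℝ X y (U y), U y⟫)
        = fun y => -((1 + ⟪U y, U y⟫) * ⟪X y, X y⟫) := funext hF
    have h2' : HasFDerivAt (fun y => -((1 + ⟪U y, U y⟫) * ⟪X y, X y⟫)) _ x := h2
    rw [← h3] at h2'
    have h4 := DFunLike.congr_fun (h1.unique h2') h
    simp [fderivInnerCLM_apply, inner_add_left] at h4
    rw [real_inner_comm (fderiv ℝ X x h) (X x), real_inner_comm (fderiv ℝ U x h) (U x)] at h4
    rw [inner_add_left, real_inner_self_eq_norm_sq, real_inner_self_eq_norm_sq]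
    linarith
  have hsym1 : ∀ c a b, ⟪fderiv ℝ (fderiv ℝ X) x c a, b⟫ = ⟪fderiv ℝ (fderiv ℝ X) x c b, a⟫ := by
    intro c a b
    have h1 := ((hDXx x).clm_apply (hasFDerivAt_const a x)).inner ℝ (hasFDerivAt_const b x)
    have h2 := ((hDXx x).clm_apply (hasFDerivAt_const b x)).inner ℝ (hasFDerivAt_const a x)
    have h3 : (fun y => ⟪fderiv ℝ X y a, b⟫) = fun y => ⟪fderiv ℝ X y b, a⟫ :=
      funext fun y => sX y a b
    have h1' : HasFDerivAt (fun y => ⟪fderiv ℝ X y a, b⟫) _ x := h1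
    rw [h3] at h1'
    have h4 := DFunLike.congr_fun (h1'.unique h2) c
    simpa [fderivInnerCLM_apply] using h4
  have hsym2 : ∀ a b, fderiv ℝ (fderiv ℝ X) x a b = fderiv ℝ (fderiv ℝ X) x b a := by
    intro a b
    have hs : IsSymmSndFDerivAt ℝ X x := hX.contDiffAt.isSymmSndFDerivAt (by simp)
    exact hs a b
  have e1 : ⟪fderiv ℝ (fderiv ℝ X) x (U x) (U x), X x⟫
      = ⟪fderiv ℝ (fderiv ℝ X) x (X x) (U x), U x⟫ := by
    rw [hsym1, hsym2]
  have e2 := hDF (X x)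
  rw [inner_add_left, sX x (fderiv ℝ U x (X x)), hDUX, inner_neg_right] at e2
  rw [← hDUX, sU x (X x), hXU, inner_smul_left] at e2
  simp only [RCLike.conj_to_real] at e2
  have hcs := real_inner_mul_inner_self_le (fderiv ℝ X x (U x)) (U x)
  rw [hF] at hcs
  have hw : 0 ≤ ⟪U x, U x⟫ := real_inner_self_nonneg
  have hq : 0 ≤ ⟪fderiv ℝ X x (U x), fderiv ℝ X x (U x)⟫ := real_inner_self_nonneg
  rw [e1]
  set W := 1 + ⟪U x, U x⟫ with hW
  set Y := ⟪X x, X x⟫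
  set Q := ⟪fderiv ℝ X x (U x), fderiv ℝ X x (U x)⟫
  have hWpos : 0 < W := by rw [hW]; linarith
  have hQ : W * Y ^ 2 ≤ Q := by
    have : W * (W * Y ^ 2) ≤ W * Q := by
      calc W * (W * Y ^ 2) ≤ Q * ⟪U x, U x⟫ := by linarith
        _ ≤ W * Q := by rw [hW]; linarith
    exact le_of_mul_le_mul_left this hWpos
  nlinarith

/-- Interior estimate by the Bernstein method. -/
theorem yu_bound [FiniteDimensional ℝ E] {U X : E → E} (hX : ContDiff ℝ 2 X)
    (hkey : ∀ x, 2 * (1 + ⟪U x, U x⟫) * ⟪X x, X x⟫ ^ 2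
        - 4 * (1 + ⟪U x, U x⟫) * ⟪fderiv ℝ X x (X x), X x⟫
      ≤ 2 * ⟪fderiv ℝ X x (U x), fderiv ℝ X x (U x)⟫
        + 2 * ⟪fderiv ℝ (fderiv ℝ X) x (U x) (U x), X x⟫)
    {R : ℝ} (hR : 0 < R) (z : E) (hz : ‖z‖ < R) :
    (R ^ 2 - ⟪z, z⟫) ^ 2 * ⟪X z, X z⟫ ≤ 49 * R ^ 2 := by
  have dX : Differentiable ℝ X := hX.differentiable (by norm_num)
  have dDX : Differentiable ℝ (fderiv ℝ X) :=
    (hX.fderiv_right (m := 1) (by norm_num)).differentiable (by norm_num)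
  have cX := dX.continuous
  let Φ : E → ℝ := fun y => (R ^ 2 - ⟪y, y⟫) ^ 2 * ⟪X y, X y⟫
  have cΦ : Continuous Φ := by fun_prop
  obtain ⟨x, hxm, hx⟩ := (isCompact_closedBall (0 : E) R).exists_isMaxOn
    ⟨0, by simp [hR.le]⟩ cΦ.continuousOn
  have hzx : Φ z ≤ Φ x := hx (by simpa using hz.le)
  change Φ z ≤ _
  refine hzx.trans ?_
  by_cases h0 : Φ x = 0
  · rw [h0]; positivity
  have hxR : ‖x‖ ≤ R := by simpa using hxm
  have hxlt : ‖x‖ < R := by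
    refine lt_of_le_of_ne hxR fun h => h0 ?_
    simp [Φ, h]
  have hYne : ⟪X x, X x⟫ ≠ 0 := fun h => h0 (by simp only [Φ, h, mul_zero])
  have hY0 : 0 < ⟪X x, X x⟫ := lt_of_le_of_ne real_inner_self_nonneg (Ne.symm hYne)
  have hloc : IsLocalMax Φ x := by
    refine hx.isLocalMax ?_
    exact mem_of_superset (Metric.isOpen_ball.mem_nhds (by simpa using hxlt))
      Metric.ball_subset_closedBall
  have hη : 0 < R ^ 2 - ⟪x, x⟫ := by
    rw [real_inner_self_eq_norm_sq]
    nlinarith [norm_nonneg x]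
  -- directional conditions
  have hdir : ∀ p : E,
      (2 * (R ^ 2 - ⟪x, x⟫) * (-2 * ⟪x, p⟫)) * ⟪X x, X x⟫
        + (R ^ 2 - ⟪x, x⟫) ^ 2 * (2 * ⟪fderiv ℝ X x p, X x⟫) = 0 ∧
      (2 * (-2 * ⟪x, p⟫) ^ 2 + 2 * (R ^ 2 - ⟪x, x⟫) * (-2 * ⟪p, p⟫)) * ⟪X x, X x⟫
        + 2 * ((2 * (R ^ 2 - ⟪x, x⟫) * (-2 * ⟪x, p⟫)) * (2 * ⟪fderiv ℝ X x p, X x⟫))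
        + (R ^ 2 - ⟪x, x⟫) ^ 2 * (2 * ⟪fderiv ℝ X x p, fderiv ℝ X x p⟫
            + 2 * ⟪fderiv ℝ (fderiv ℝ X) x p p, X x⟫) ≤ 0 := by
    intro p
    have hL : ∀ t : ℝ, HasDerivAt (fun s : ℝ => x + s • p) p t := fun t => by
      simpa using ((hasDerivAt_id t).smul_const p).const_add x
    have hA : ∀ t : ℝ, HasDerivAt (fun s : ℝ => R ^ 2 - ⟪x + s • p, x + s • p⟫)
        (-2 * ⟪x + t • p, p⟫) t := by
      intro t
      have := ((hL t).inner ℝ (hL t)).const_sub (R ^ 2)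
      refine HasDerivAt.congr_deriv this ?_
      rw [real_inner_comm p]; ring
    have hXl := yu_hasDerivAt_line dX x p
    have hB : ∀ t : ℝ, HasDerivAt (fun s : ℝ => ⟪X (x + s • p), X (x + s • p)⟫)
        (2 * ⟪fderiv ℝ X (x + t • p) p, X (x + t • p)⟫) t := by
      intro t
      have := (hXl t).inner ℝ (hXl t)
      refine HasDerivAt.congr_deriv this ?_
      rw [real_inner_comm (X _)]; ring
    have hA' : HasDerivAt (fun t : ℝ => -2 * ⟪x + t • p, p⟫) (-2 * ⟪p, p⟫) 0 := by
      have := ((hL 0).inner ℝ (hasDerivAt_const (0:ℝ) p)).const_mul (-2)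
      refine HasDerivAt.congr_deriv this ?_
      simp
    have hB' : HasDerivAt (fun t : ℝ => 2 * ⟪fderiv ℝ X (x + t • p) p, X (x + t • p)⟫)
        (2 * ⟪fderiv ℝ X x p, fderiv ℝ X x p⟫ + 2 * ⟪fderiv ℝ (fderiv ℝ X) x p p, X x⟫) 0 := by
      have h1 := ((yu_hasDerivAt_line dDX x p 0).clm_apply (hasDerivAt_const (0:ℝ) p))
      have := (h1.inner ℝ (hXl 0)).const_mul 2
      refine HasDerivAt.congr_deriv this ?_
      simp; ring
    have hf : ∀ t : ℝ, HasDerivAt (fun s : ℝ => Φ (x + s • p))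
        ((2 * (R ^ 2 - ⟪x + t • p, x + t • p⟫) * (-2 * ⟪x + t • p, p⟫))
            * ⟪X (x + t • p), X (x + t • p)⟫
          + (R ^ 2 - ⟪x + t • p, x + t • p⟫) ^ 2 *
            (2 * ⟪fderiv ℝ X (x + t • p) p, X (x + t • p)⟫)) t := by
      intro t
      have := ((hA t).pow 2).mul (hB t)
      refine HasDerivAt.congr_deriv this ?_
      simp
    have hf' := ((((hA 0).const_mul 2).mul hA').mul (hB 0)).add (((hA 0).pow 2).mul hB')
    have hm : IsLocalMax (fun s : ℝ => Φ (x + s • p)) 0 := by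
      have hc : Tendsto (fun s : ℝ => x + s • p) (𝓝 0) (𝓝 x) := by
        have := (hL 0).continuousAt.tendsto
        simpa using this
      have := hc.eventually hloc
      simpa [IsLocalMax, IsMaxFilter] using this
    have := yu_second_test hf hf' hm
    simp only [zero_smul, add_zero, Pi.pow_apply, Pi.mul_apply] at this
    refine ⟨this.1, ?_⟩
    have h2 := this.2
    norm_num at h2 ⊢
    linarith
  obtain ⟨hp1, hp2⟩ := hdir (U x)
  obtain ⟨hx1, -⟩ := hdir (X x)
  have hk := hkey x
  have hxX : ⟪x, X x⟫ ≤ R * ‖X x‖ :=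
    (real_inner_le_norm _ _).trans (mul_le_mul_of_nonneg_right hxR (norm_nonneg _))
  have hxU : ⟪x, U x⟫ ^ 2 ≤ R ^ 2 * ⟪U x, U x⟫ := by
    have h1 := real_inner_mul_inner_self_le x (U x)
    have h2 : ⟪x, x⟫ ≤ R ^ 2 := by linarith
    nlinarith [mul_le_mul_of_nonneg_right h2 (real_inner_self_nonneg (x := U x))]
  have hYs : ⟪X x, X x⟫ = ‖X x‖ ^ 2 := real_inner_self_eq_norm_sq _
  have hw : 0 ≤ ⟪U x, U x⟫ := real_inner_self_nonneg
  have hηR : R ^ 2 - ⟪x, x⟫ ≤ R ^ 2 := by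
    have : 0 ≤ ⟪x, x⟫ := real_inner_self_nonneg
    linarith
  change (R ^ 2 - ⟪x, x⟫) ^ 2 * ⟪X x, X x⟫ ≤ 49 * R ^ 2
  set η := R ^ 2 - ⟪x, x⟫
  set w := ⟪U x, U x⟫
  set Y := ⟪X x, X x⟫
  set a := ⟪x, U x⟫
  set b := ⟪x, X x⟫
  set yp := ⟪fderiv ℝ X x (U x), X x⟫
  set yx := ⟪fderiv ℝ X x (X x), X x⟫
  set q := ‖X x‖
  set S := 2 * ⟪fderiv ℝ X x (U x), fderiv ℝ X x (U x)⟫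
        + 2 * ⟪fderiv ℝ (fderiv ℝ X) x (U x) (U x), X x⟫
  have hq : 0 < q := by
    have : 0 ≤ q := norm_nonneg _
    rcases this.lt_or_eq with h | h
    · exact h
    · rw [← h] at hYs; simp at hYs; linarith
  have f1 : η * yp = 2 * a * Y := by
    have : η * (η * yp - 2 * a * Y) = 0 := by linarith
    rcases mul_eq_zero.1 this with h | h <;> linarith
  have f2 : η * yx = 2 * b * Y := by
    have : η * (η * yx - 2 * b * Y) = 0 := by linarith
    rcases mul_eq_zero.1 this with h | h <;> linarith
  have f3 : η ^ 2 * S ≤ Y * (24 * a ^ 2 + 4 * η * w) := by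
    have : 2 * (2 * η * (-2 * a) * (2 * yp)) = -32 * a ^ 2 * Y := by
      linear_combination (-16 * a) * f1
    linarith
  have f4 : η ^ 2 * (2 * (1 + w) * Y ^ 2 - 4 * (1 + w) * yx)
      = Y * (2 * (1 + w) * (η ^ 2 * Y) - 8 * (1 + w) * η * b) := by
    linear_combination (-4 * (1 + w) * η) * f2
  have f5 : Y * (2 * (1 + w) * (η ^ 2 * Y) - 8 * (1 + w) * η * b)
      ≤ Y * (24 * a ^ 2 + 4 * η * w) := by
    rw [← f4]
    exact (mul_le_mul_of_nonneg_left hk (sq_nonneg η)).trans f3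
  have f6 := le_of_mul_le_mul_left f5 hY0
  have f7 : (1 + w) * (2 * (η ^ 2 * Y)) ≤ (1 + w) * (28 * R ^ 2 + 8 * η * (R * q)) := by
    have g1 : (1 + w) * η * b ≤ (1 + w) * η * (R * q) :=
      mul_le_mul_of_nonneg_left hxX (by positivity)
    have g2 : η * w ≤ R ^ 2 * w := mul_le_mul_of_nonneg_right hηR hw
    nlinarith [sq_nonneg R]
  have f8 := le_of_mul_le_mul_left f7 (by linarith)
  rw [hYs] at f8 ⊢
  have hs : 0 < η * q := mul_pos hη hq
  have f9 : η * q ≤ 7 * R := by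
    by_contra hcon
    push Not at hcon
    have c1 := mul_lt_mul_of_pos_right hcon hs
    have c2 := mul_lt_mul_of_pos_left hcon hR
    have c3 : η ^ 2 * q ^ 2 = (η * q) * (η * q) := by ring
    rw [c3] at f8
    have c4 : 0 < R ^ 2 := by positivity
    nlinarith only [f8, c1, c2, c4]
  have d1 := mul_le_mul f9 f9 hs.le (by positivity)
  nlinarith only [d1]

/-- The eikonal part: a gradient field with `DU U = 0` on the whole space is constant. -/
theorem yu_eikonal {u : E → ℝ} {U : E → E} (hu : Differentiable ℝ u) (hU : ContDiff ℝ 1 U)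
    (hg : ∀ x v, fderiv ℝ u x v = ⟪U x, v⟫)
    (sU : ∀ x a b, ⟪fderiv ℝ U x a, b⟫ = ⟪fderiv ℝ U x b, a⟫)
    (h0 : ∀ x, fderiv ℝ U x (U x) = 0) (y : E) : u y = ⟪U 0, y⟫ + u 0 := by
  have dU : Differentiable ℝ U := hU.differentiable (by norm_num)
  have cDU : Continuous (fderiv ℝ U) := hU.continuous_fderiv (by norm_num)
  -- the norm of `U` is constant
  have hnorm : ∀ x, ‖U x‖ = ‖U 0‖ := by
    have hd : ∀ x, HasFDerivAt (fun y => ⟪U y, U y⟫) (0 : E →L[ℝ] ℝ) x := by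
      intro x
      have h1 := (dU x).hasFDerivAt.inner ℝ (dU x).hasFDerivAt
      refine HasFDerivAt.congr_fderiv h1 ?_
      ext v
      have : ⟪fderiv ℝ U x v, U x⟫ = 0 := by rw [sU, h0, inner_zero_left]
      simp [fderivInnerCLM_apply, this, real_inner_comm (fderiv ℝ U x v)]
    intro x
    have := is_const_of_fderiv_eq_zero (𝕜 := ℝ) (fun x => (hd x).differentiableAt)
      (fun x => (hd x).fderiv) x 0
    simp only [real_inner_self_eq_norm_sq] at this
    exact (sq_eq_sq₀ (norm_nonneg _) (norm_nonneg _)).1 this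
  set p := U 0 with hp
  have hlip : ∀ a b, |u a - u b| ≤ ‖p‖ * ‖a - b‖ := by
    intro a b
    have := Convex.norm_image_sub_le_of_norm_fderiv_le (𝕜 := ℝ) (f := u) (C := ‖p‖)
      (s := Set.univ) (x := b) (y := a) (fun x _ => hu x) (fun x _ => ?_) convex_univ
      trivial trivial
    · simpa using this
    · refine ContinuousLinearMap.opNorm_le_bound _ (norm_nonneg _) fun v => ?_
      rw [hg, ← hnorm x]
      exact norm_inner_le_norm _ _
  -- along the line through `0`, for either direction
  have hline : ∀ σ : ℝ, ∀ t : ℝ, 0 ≤ t → U (t • (σ • p)) = p := by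
    intro σ T hT
    let f : ℝ → E := fun t => U (0 + t • (σ • p)) - p
    let f' : ℝ → E := fun t => fderiv ℝ U (0 + t • (σ • p)) (σ • p)
    have hf : ∀ t, HasDerivAt f (f' t) t := fun t =>
      (yu_hasDerivAt_line dU 0 (σ • p) t).sub_const p
    have hfeq : ∀ t, f' t = -(σ • fderiv ℝ U (0 + t • (σ • p)) (f t)) := by
      intro t
      simp only [f, f', map_sub, h0, map_smul]
      simp
    have hcont : Continuous fun t : ℝ => ‖σ • fderiv ℝ U (0 + t • (σ • p))‖ := by fun_prop
    obtain ⟨K, hK⟩ := (isCompact_Icc (a := (0:ℝ)) (b := T)).bddAbove_image hcont.continuousOn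
    have := eq_zero_of_abs_deriv_le_mul_abs_self_of_eq_zero_right (f := f) (f' := f') (K := K)
      (a := 0) (b := T)
      (fun t _ => (hf t).continuousAt.continuousWithinAt)
      (fun t _ => (hf t).hasDerivWithinAt) (by simp [f, hp]) (fun t ht => ?_) T ⟨hT, le_rfl⟩
    · simpa [f, sub_eq_zero] using this
    · rw [hfeq, norm_neg]
      refine (ContinuousLinearMap.le_opNorm (σ • fderiv ℝ U (0 + t • (σ • p))) (f t)).trans ?_
      exact mul_le_mul_of_nonneg_right (hK ⟨t, ⟨ht.1, ht.2.le⟩, rfl⟩) (norm_nonneg _)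
  have hline' : ∀ t : ℝ, U (t • p) = p := by
    intro t
    simpa using hline t 1 zero_le_one
  have hu_line : ∀ t : ℝ, u (t • p) = u 0 + t * ‖p‖ ^ 2 := by
    intro t
    have hd : ∀ s, HasDerivAt (fun s : ℝ => u (0 + s • p) - s * ‖p‖ ^ 2) 0 s := by
      intro s
      have h1 := (yu_hasDerivAt_line hu 0 p s).sub ((hasDerivAt_id s).mul_const (‖p‖ ^ 2))
      refine HasDerivAt.congr_deriv h1 ?_
      rw [hg, zero_add, hline', real_inner_self_eq_norm_sq]; ring
    have := is_const_of_deriv_eq_zero (fun s => (hd s).differentiableAt)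
      (fun s => (hd s).deriv) t 0
    simp at this
    linarith
  have hmain : ∀ t : ℝ, 0 < t → |u y - u 0 - ⟪p, y⟫| ≤ ‖y‖ ^ 2 / (2 * t) := by
    intro t ht
    have amgm : ∀ s : ℝ, |s| = t →
        t * (‖p‖ * ‖s • p - y‖) ≤ t ^ 2 * ‖p‖ ^ 2 - s * ⟪p, y⟫ + ‖y‖ ^ 2 / 2 := by
      intro s hs
      have h1 := norm_sub_sq_real (s • p) y
      rw [inner_smul_left, norm_smul, Real.norm_eq_abs, hs] at h1
      simp only [RCLike.conj_to_real] at h1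
      nlinarith [sq_nonneg (t * ‖p‖ - ‖s • p - y‖)]
    have a1 := amgm t (abs_of_pos ht)
    have a2 := amgm (-t) (by rw [abs_neg, abs_of_pos ht])
    have l1 := (abs_le.1 (hlip (t • p) y)).2
    have l2 := (abs_le.1 (hlip ((-t) • p) y)).1
    rw [hu_line] at l1 l2
    rw [le_div_iff₀ (by positivity)]
    have b1 := mul_le_mul_of_nonneg_left l1 ht.le
    have b2 := mul_le_mul_of_nonneg_left l2 ht.le
    rw [← abs_of_pos (show 0 < 2 * t by positivity), ← abs_mul, abs_le]
    constructor <;> nlinarith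
  have hzero : |u y - u 0 - ⟪p, y⟫| ≤ 0 := by
    have htend : Tendsto (fun t : ℝ => ‖y‖ ^ 2 / (2 * t)) atTop (𝓝 0) :=
      Tendsto.const_div_atTop (tendsto_id.const_mul_atTop (by norm_num)) _
    exact ge_of_tendsto htend ((eventually_gt_atTop 0).mono hmain)
  have := abs_nonpos_iff.1 hzero
  linarith

/-- Coordinate-free version of the theorem. -/
theorem yu_main [FiniteDimensional ℝ E] {u : E → ℝ} (hu : ContDiff ℝ 4 u) {U : E → E}
    (hU : ContDiff ℝ 3 U) (hg : ∀ x v, fderiv ℝ u x v = ⟪U x, v⟫)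
    (hinf : ∀ x, ⟪fderiv ℝ U x (U x), U x⟫ = 0) (y : E) : u y = ⟪U 0, y⟫ + u 0 := by
  have dU : Differentiable ℝ U := hU.differentiable (by norm_num)
  have sU := yu_symm (hu.of_le (by norm_num)) dU hg
  have hWpos : ∀ x, 0 < 1 + ⟪U x, U x⟫ := fun x => by
    have : 0 ≤ ⟪U x, U x⟫ := real_inner_self_nonneg
    linarith
  have hW : ContDiff ℝ 3 fun x => 1 + ⟪U x, U x⟫ := contDiff_const.add (hU.inner ℝ hU)
  let X : E → E := fun x => (1 + ⟪U x, U x⟫)⁻¹ • fderiv ℝ U x (U x)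
  have hX : ContDiff ℝ 2 X := by
    refine ContDiff.smul ?_ ?_
    · exact (hW.of_le (by norm_num)).inv fun x => (hWpos x).ne'
    · exact (hU.fderiv_right (m := 2) (by norm_num)).clm_apply (hU.of_le (by norm_num))
  let g : E → ℝ := fun x => (1 / 2) * Real.log (1 + ⟪U x, U x⟫)
  have hgC : ContDiff ℝ 2 g :=
    contDiff_const.mul ((hW.of_le (by norm_num)).log fun x => (hWpos x).ne')
  have hgX : ∀ x v, fderiv ℝ g x v = ⟪X x, v⟫ := by
    intro x v
    have h1 := (((((dU x).hasFDerivAt.inner ℝ (dU x).hasFDerivAt).const_add 1).log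
      (hWpos x).ne').const_mul (1 / 2))
    have h2 : HasFDerivAt g _ x := h1
    rw [h2.fderiv]
    simp only [X, inner_smul_left, sU x (U x) v]
    simp [fderivInnerCLM_apply, real_inner_comm (fderiv ℝ U x v)]
    ring
  have sX := yu_symm hgC (hX.differentiable (by norm_num)) hgX
  have hXU : ∀ x, fderiv ℝ U x (U x) = (1 + ⟪U x, U x⟫) • X x := by
    intro x
    simp only [X]
    rw [smul_inv_smul₀ (hWpos x).ne']
  have horth : ∀ x, ⟪X x, U x⟫ = 0 := by
    intro x
    simp only [X, inner_smul_left, hinf, mul_zero]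
  have hkey := yu_key (hU.of_le (by norm_num)) hX sU sX hXU horth
  have hX0 : ∀ x, X x = 0 := by
    intro x
    by_contra hne
    have hY : 0 < ‖X x‖ := norm_pos_iff.2 hne
    have hb : ∀ᶠ R : ℝ in atTop, ‖X x‖ ≤ 14 / R := by
      filter_upwards [eventually_gt_atTop (2 * ‖x‖), eventually_gt_atTop 0] with R h1 h2
      have := yu_bound hX hkey h2 x (by linarith [norm_nonneg x])
      rw [real_inner_self_eq_norm_sq, real_inner_self_eq_norm_sq, ← mul_pow,
        show 49 * R ^ 2 = (7 * R) ^ 2 by ring] at this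
      have h3 := abs_le_of_sq_le_sq' this (by positivity) |>.2
      rw [le_div_iff₀ h2]
      have h4 : R ^ 2 / 2 ≤ R ^ 2 - ‖x‖ ^ 2 := by nlinarith [norm_nonneg x]
      have h5 := mul_le_mul_of_nonneg_right h4 hY.le
      have h6 : R * (‖X x‖ * R) ≤ R * 14 := by nlinarith
      exact le_of_mul_le_mul_left h6 h2
    have htend : Tendsto (fun R : ℝ => 14 / R) atTop (𝓝 0) :=
      Tendsto.const_div_atTop tendsto_id _
    have := ge_of_tendsto htend hb
    linarith
  refine yu_eikonal (hu.differentiable (by norm_num)) (hU.of_le (by norm_num)) hg sU ?_ y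
  intro x
  rw [hXU, hX0, smul_zero]

end YuHelpers

/-- **Yu's Bernstein-type theorem**: every entire `C⁴` solution of the `∞`-Laplace
equation `Δ_∞ u = Σ_{j,k} u_{x_j} u_{x_k} u_{x_j x_k} = 0` over `ℝⁿ` is affine linear. -/
theorem yu_infinity_laplace_bernstein (n : ℕ) (hn : 1 ≤ n)
    (u : EuclideanSpace ℝ (Fin n) → ℝ) (hu : ContDiff ℝ 4 u)
    (hinf : ∀ x : EuclideanSpace ℝ (Fin n),
      ∑ j, ∑ k, pd u x j * pd u x k * pd2 u x j k = 0) :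
    ∃ (a : EuclideanSpace ℝ (Fin n)) (c : ℝ),
      ∀ x : EuclideanSpace ℝ (Fin n), u x = ⟪a, x⟫ + c := by
  let U : EuclideanSpace ℝ (Fin n) → EuclideanSpace ℝ (Fin n) := fun x =>
    (InnerProductSpace.toDual ℝ (EuclideanSpace ℝ (Fin n))).symm (fderiv ℝ u x)
  have hU : ContDiff ℝ 3 U :=
    (InnerProductSpace.toDual ℝ (EuclideanSpace ℝ (Fin n))).symm.contDiff.comp
      (hu.fderiv_right (m := 3) (by norm_num))
  have hg : ∀ x v, fderiv ℝ u x v = ⟪U x, v⟫ := fun x v => by simp [U]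
  have dU : Differentiable ℝ U := hU.differentiable (by norm_num)
  refine ⟨U 0, u 0, fun y => yu_main hu hU hg (fun x => ?_) y⟩
  have hpd : ∀ j, pd u x j = U x j := by
    intro j
    rw [pd, hg]
    simp [EuclideanSpace.inner_single_right]
  have hpd2 : ∀ j k, pd2 u x j k
      = fderiv ℝ U x (EuclideanSpace.single k 1) j := by
    intro j k
    rw [pd2]
    have h1 : (fun y => fderiv ℝ u y (EuclideanSpace.single j 1))
        = fun y => ⟪U y, EuclideanSpace.single j (1:ℝ)⟫ := by
      funext y; rw [hg]
    have h2 := (dU x).hasFDerivAt.inner ℝ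
      (hasFDerivAt_const (EuclideanSpace.single j (1:ℝ)) x)
    have h3 : HasFDerivAt (fun y => ⟪U y, EuclideanSpace.single j (1:ℝ)⟫) _ x := h2
    rw [h1, h3.fderiv]
    simp [fderivInnerCLM_apply, EuclideanSpace.inner_single_right]
  have hsum : U x = ∑ k, U x k • EuclideanSpace.single k (1:ℝ) := by
    have := (EuclideanSpace.basisFun (Fin n) ℝ).sum_repr (U x)
    simpa using this.symm
  have hDU : ∀ j, (fderiv ℝ U x (U x)) j = ∑ k, U x k * fderiv ℝ U x (EuclideanSpace.single k 1) j := by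
    intro j
    conv_lhs => rw [hsum]
    rw [map_sum]
    simp
  rw [PiLp.inner_apply]
  simp only [hDU]
  rw [← hinf x]
  refine Finset.sum_congr rfl fun j _ => ?_
  simp only [hpd, hpd2]
  simp [Finset.mul_sum]
  refine Finset.sum_congr rfl fun k _ => ?_
  ring
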